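/- Let S be a pseudo-symmetric numerical semigroup minimally generated by four elements n_1, n_2, n_3, n_4, let k be a field, and suppose that I_S is generated by G = {f_1 = x_1^{c_1} − x_3 x_4^{c_4−1}, f_2 = x_2^{c_2} − x_1^{c_{21}} x_4, f_3 = x_3^{c_3} − x_1^{c_1−c_{21}−1} x_2, f_4 = x_4^{c_4} − x_1 x_2^{c_2−1} x_3^{c_3−1}, f_5 = x_3^{c_3−1} x_1^{c_{21}+1} − x_2 x_4^{c_4−1}} for positive integers c_1, c_2, c_3, c_4 and 0 < c_{21} < c_1 (Komeda's presentation). Then: (1) AP(S,n_1) is a homogeneous set; (2) for each i ∈ {2,3,4}, AP(S,n_i) is homogeneous if and only if the set {c_{i−1}·n_{i−1}} ∩ AP(S,n_i) is homogeneous, i.e. either c_{i−1}·n_{i−1} ∉ AP(S,n_i) or all factorizations of c_{i−1}·n_{i−1} have the same length; (3) for each i ∈ {2,3,4}, if the binomial f_{i−1} is homogeneous then AP(S,n_i) is homogeneous. -/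

import Mathlib

open scoped BigOperators

/-- The value `Σ aᵢ nᵢ` of a tuple of coefficients `a` w.r.t. the generators `n`. -/
def sval {d : ℕ} (n : Fin d → ℕ) (a : Fin d → ℕ) : ℕ := ∑ i, a i * n i

/-- The total length `Σ aᵢ` of a factorization. -/
def tlen {d : ℕ} (a : Fin d → ℕ) : ℕ := ∑ i, a i

/-- The submonoid of `ℕ` generated by `n`. -/
def gen {d : ℕ} (n : Fin d → ℕ) : Set ℕ := {s : ℕ | ∃ a : Fin d → ℕ, s = sval n a}

/-- The Apéry set of the semigroup generated by `n` with respect to `s`: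
elements `x` of the semigroup such that `x - s` is not in the semigroup. -/
def Apery {d : ℕ} (n : Fin d → ℕ) (s : ℕ) : Set ℕ :=
  {x : ℕ | x ∈ gen n ∧ ¬ ∃ y ∈ gen n, x = s + y}

/-- A subset `T` is homogeneous if every nonzero element of `T` has all its
factorizations of the same length. -/
def HomogSet {d : ℕ} (n : Fin d → ℕ) (T : Set ℕ) : Prop :=
  ∀ t ∈ T, t ≠ 0 → ∀ a b : Fin d → ℕ, sval n a = t → sval n b = t → tlen a = tlen b

/-- The order of `s`: the maximal length of a factorization of `s`. -/
noncomputable def ordS {d : ℕ} (n : Fin d → ℕ) (s : ℕ) : ℕ :=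
  sSup {l : ℕ | ∃ a : Fin d → ℕ, sval n a = s ∧ tlen a = l}

/-- The torsion set of the semigroup generated by `n`, with respect to the
generator of index `i0` (the smallest generator). -/
noncomputable def Torsion {d : ℕ} (n : Fin d → ℕ) (i0 : Fin d) : Set ℕ :=
  {s : ℕ | s ∈ gen n ∧ ∃ c : ℕ, 0 < c ∧ ordS n s + c < ordS n (s + c * n i0)}

/-- `n` is a minimal system of generators: any expression of a generator as a
nonnegative combination of the generators has total coefficient sum one. -/
def MinGen {d : ℕ} (n : Fin d → ℕ) : Prop :=
  ∀ r : Fin d, ∀ a : Fin d → ℕ, n r = sval n a → tlen a = 1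

/-- `n` generates a numerical semigroup (cofinite in `ℕ`). -/
def IsNumerical {d : ℕ} (n : Fin d → ℕ) : Prop := {x : ℕ | x ∉ gen n}.Finite

/-- The monomial `x^a = Π xᵢ^{aᵢ}`. -/
noncomputable def monom (k : Type*) [CommRing k] {d : ℕ} (a : Fin d → ℕ) :
    MvPolynomial (Fin d) k :=
  ∏ i, (MvPolynomial.X i : MvPolynomial (Fin d) k) ^ a i

/-- The toric ideal `I_S`: kernel of `k[x₁,…,x_d] → k[t]`, `xᵢ ↦ t^{nᵢ}`. -/
noncomputable def toricIdeal (k : Type*) [CommRing k] {d : ℕ} (n : Fin d → ℕ) :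
    Ideal (MvPolynomial (Fin d) k) :=
  RingHom.ker (MvPolynomial.aeval (R := k)
    (fun i => (Polynomial.X : Polynomial k) ^ n i)).toRingHom

/-- `E` is a minimal generating set of the ideal `I`: it spans `I` and no
proper subset spans `I`. -/
def IsMinGenSet {R : Type*} [CommRing R] (I : Ideal R) (E : Set R) : Prop :=
  Ideal.span E = I ∧ ∀ E' : Set R, E' ⊂ E → Ideal.span E' ≠ I

/-- Membership of an integer in the semigroup generated by `n`. -/
def memZ {d : ℕ} (n : Fin d → ℕ) (z : ℤ) : Prop := ∃ x ∈ gen n, (x : ℤ) = z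

/-- A numerical semigroup with Frobenius number `F = max (ℤ ∖ S)` is symmetric
if for every integer `z`, `z ∈ S ↔ F - z ∉ S`. -/
def IsSymmetric {d : ℕ} (n : Fin d → ℕ) : Prop :=
  ∃ F : ℤ, ¬ memZ n F ∧ (∀ z : ℤ, F < z → memZ n z) ∧
    ∀ z : ℤ, memZ n z ↔ ¬ memZ n (F - z)

/-- A numerical semigroup with Frobenius number `F = max (ℤ ∖ S)` is
pseudo-symmetric if `F` is even and for every integer `z`,
`z ∈ S ↔ (z ≠ F/2 ∧ F - z ∉ S)`. -/
def IsPseudoSymmetric {d : ℕ} (n : Fin d → ℕ) : Prop :=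
  ∃ F : ℤ, ¬ memZ n F ∧ (∀ z : ℤ, F < z → memZ n z) ∧ F % 2 = 0 ∧
    ∀ z : ℤ, memZ n z ↔ (z ≠ F / 2 ∧ ¬ memZ n (F - z))

/-- The generators `q·m₁,…,q·m_d, p·n₁,…,p·n_e` of the gluing of two numerical
semigroups. -/
def glueGen {d e : ℕ} (mg : Fin d → ℕ) (ng : Fin e → ℕ) (p q : ℕ) :
    Fin (d + e) → ℕ :=
  Fin.append (fun i => q * mg i) (fun i => p * ng i)

lemma sval_add {d : ℕ} (n a b : Fin d → ℕ) : sval n (a + b) = sval n a + sval n b := by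
  simp [sval, add_mul, Finset.sum_add_distrib]

lemma tlen_add {d : ℕ} (a b : Fin d → ℕ) : tlen (a + b) = tlen a + tlen b := by
  simp [tlen, Finset.sum_add_distrib]

lemma sval_single {d : ℕ} (n : Fin d → ℕ) (i : Fin d) (c : ℕ) :
    sval n (Pi.single i c) = c * n i := by
  simp [sval, Pi.single_apply]

lemma tlen_single {d : ℕ} (i : Fin d) (c : ℕ) : tlen (Pi.single i c : Fin d → ℕ) = c := by
  simp [tlen, Pi.single_apply]

lemma aeval_monom (k : Type*) [Field k] {d : ℕ} (n a : Fin d → ℕ) :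
    MvPolynomial.aeval (R := k) (fun i => (Polynomial.X : Polynomial k) ^ n i) (monom k a)
      = Polynomial.X ^ sval n a := by
  simp [monom, sval, ← pow_mul, Finset.prod_pow_eq_pow_sum, mul_comm]

lemma mem_toric_iff (k : Type*) [Field k] {d : ℕ} (n a b : Fin d → ℕ) :
    monom k a - monom k b ∈ toricIdeal k n ↔ sval n a = sval n b := by
  unfold toricIdeal
  rw [RingHom.mem_ker]
  change MvPolynomial.aeval (R := k) (fun i => (Polynomial.X : Polynomial k) ^ n i)
    (monom k a - monom k b) = 0 ↔ _
  rw [map_sub, aeval_monom, aeval_monom, sub_eq_zero]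
  constructor
  · intro h
    have := congrArg Polynomial.natDegree h
    simpa using this
  · intro h
    rw [h]

/-- If a congruence contains the pairs of exponents of a set of binomials, then it contains the
pair of exponents of any binomial in the ideal they span. -/
lemma con_of_mem_span (k : Type*) [Field k] {d : ℕ} (C : AddCon (Fin d → ℕ))
    (G : Set (MvPolynomial (Fin d) k))
    (hG : ∀ g ∈ G, ∃ u v, g = monom k u - monom k v ∧ C u v) (a b : Fin d → ℕ)
    (h : monom k a - monom k b ∈ Ideal.span G) : C a b := by
  let φ : MvPolynomial (Fin d) k →ₐ[k] AddMonoidAlgebra k C.Quotient :=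
    MvPolynomial.aeval (fun i => AddMonoidAlgebra.single ((Pi.single i 1 : Fin d → ℕ) : C.Quotient) 1)
  have hφ : ∀ a : Fin d → ℕ, φ (monom k a) = AddMonoidAlgebra.single (a : C.Quotient) 1 := by
    intro a
    have h1 : φ (monom k a) = ∏ i, AddMonoidAlgebra.of k C.Quotient
        (Multiplicative.ofAdd (((Pi.single i (a i) : Fin d → ℕ) : C.Quotient))) := by
      simp only [monom, map_prod, map_pow, φ, MvPolynomial.aeval_X]
      refine Finset.prod_congr rfl fun i _ => ?_
      rw [AddMonoidAlgebra.single_pow, AddMonoidAlgebra.of_apply, one_pow, toAdd_ofAdd,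
        show (Pi.single i (a i) : Fin d → ℕ) = a i • Pi.single i 1 by
          rw [← Pi.single_smul]; simp]
      rfl
    rw [h1, ← map_prod, ← ofAdd_sum, AddMonoidAlgebra.of_apply, toAdd_ofAdd]
    congr 1
    conv_rhs => rw [← Finset.univ_sum_single a]
    exact (map_sum C.mk' _ _).symm
  have hle : Ideal.span G ≤ RingHom.ker φ := by
    rw [Ideal.span_le]
    intro g hg
    obtain ⟨u, v, rfl, huv⟩ := hG g hg
    rw [SetLike.mem_coe, RingHom.mem_ker, map_sub, hφ, hφ, (C.eq).2 huv, sub_self]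
  have := hle h
  rw [RingHom.mem_ker, map_sub, hφ, hφ, sub_eq_zero] at this
  exact (C.eq).1 (AddMonoidAlgebra.single_left_injective one_ne_zero this)

lemma apery_left {d : ℕ} (n : Fin d → ℕ) (s : ℕ) (a b : Fin d → ℕ)
    (h : sval n (a + b) ∈ Apery n s) : sval n a ∈ Apery n s := by
  refine ⟨⟨a, rfl⟩, ?_⟩
  rintro ⟨y, ⟨e, rfl⟩, hy⟩
  refine h.2 ⟨sval n (e + b), ⟨_, rfl⟩, ?_⟩
  rw [sval_add, sval_add, hy, add_assoc]

lemma not_apery {d : ℕ} (n : Fin d → ℕ) (i : Fin d) (u : Fin d → ℕ) (h : 0 < u i) :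
    sval n u ∉ Apery n (n i) := by
  intro hu
  refine hu.2 ⟨sval n (u - Pi.single i 1), ⟨_, rfl⟩, ?_⟩
  have : u = Pi.single i 1 + (u - Pi.single i 1) := by
    ext j
    by_cases hj : j = i
    · subst hj; simp; omega
    · simp [hj]
  conv_lhs => rw [this]
  rw [sval_add, sval_single, one_mul]

/-- The congruence of pairs with equal value, and equal length if the value is in an Apery set. -/
def aperyCon {d : ℕ} (n : Fin d → ℕ) (s : ℕ) : AddCon (Fin d → ℕ) where
  r a b := sval n a = sval n b ∧ (sval n a ∈ Apery n s → tlen a = tlen b)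
  iseqv :=
    ⟨fun _ => ⟨rfl, fun _ => rfl⟩, fun h => ⟨h.1.symm, fun h' => (h.2 (h.1 ▸ h')).symm⟩,
      fun h g => ⟨h.1.trans g.1, fun h' => (h.2 h').trans (g.2 (h.1 ▸ h'))⟩⟩
  add' := by
    intro w x y z h g
    refine ⟨by rw [sval_add, sval_add, h.1, g.1], fun h' => ?_⟩
    rw [tlen_add, tlen_add, h.2 (apery_left n s _ _ h'),
      g.2 (apery_left n s y w (by rwa [add_comm]))]

lemma homog_of_gens (k : Type*) [Field k] {d : ℕ} (n : Fin d → ℕ) (s : ℕ)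
    (G : Set (MvPolynomial (Fin d) k)) (hI : toricIdeal k n = Ideal.span G)
    (hG : ∀ g ∈ G, ∃ u v, g = monom k u - monom k v ∧
      (sval n u ∈ Apery n s → tlen u = tlen v)) : HomogSet n (Apery n s) := by
  intro t ht _ a b ha hb
  have hab : aperyCon n s a b := by
    refine con_of_mem_span k (aperyCon n s) G ?_ a b ?_
    · intro g hg
      obtain ⟨u, v, rfl, huv⟩ := hG g hg
      refine ⟨u, v, rfl, ?_, huv⟩
      rw [← mem_toric_iff k, hI]
      exact Ideal.subset_span hg
    · rw [← hI, mem_toric_iff, ha, hb]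
  exact hab.2 (ha ▸ ht)

/-- for a pseudo-symmetric numerical semigroup of embedding
dimension 4 with Komeda's presentation, `AP(S,n₁)` is homogeneous; for
`i = 2,3,4`, `AP(S,nᵢ)` is homogeneous iff `{c_{i-1}·n_{i-1}} ∩ AP(S,nᵢ)` is
homogeneous; and if `f_{i-1}` is homogeneous then `AP(S,nᵢ)` is homogeneous. -/
theorem statement10 (k : Type*) [Field k] (n : Fin 4 → ℕ)
    (hpos : ∀ i, 0 < n i) (hinj : Function.Injective n)
    (hnum : IsNumerical n) (hmin : MinGen n) (hps : IsPseudoSymmetric n)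
    (c1 c2 c3 c4 c21 : ℕ) (hc1 : 0 < c1) (hc2 : 0 < c2) (hc3 : 0 < c3)
    (hc4 : 0 < c4) (hc21 : 0 < c21) (hc21lt : c21 < c1)
    (hI : toricIdeal k n = Ideal.span
      {monom k (Pi.single 0 c1) -
         monom k (Pi.single 2 1 + Pi.single 3 (c4 - 1)),
       monom k (Pi.single 1 c2) -
         monom k (Pi.single 0 c21 + Pi.single 3 1),
       monom k (Pi.single 2 c3) -
         monom k (Pi.single 0 (c1 - c21 - 1) + Pi.single 1 1),
       monom k (Pi.single 3 c4) -
         monom k (Pi.single 0 1 + Pi.single 1 (c2 - 1) + Pi.single 2 (c3 - 1)),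
       monom k (Pi.single 2 (c3 - 1) + Pi.single 0 (c21 + 1)) -
         monom k (Pi.single 1 1 + Pi.single 3 (c4 - 1))}) :
    HomogSet n (Apery n (n 0)) ∧
    ((HomogSet n (Apery n (n 1)) ↔
        HomogSet n (({c1 * n 0} : Set ℕ) ∩ Apery n (n 1))) ∧
      (HomogSet n (Apery n (n 2)) ↔
        HomogSet n (({c2 * n 1} : Set ℕ) ∩ Apery n (n 2))) ∧
      (HomogSet n (Apery n (n 3)) ↔
        HomogSet n (({c3 * n 2} : Set ℕ) ∩ Apery n (n 3)))) ∧
    ((tlen (Pi.single 0 c1 : Fin 4 → ℕ) =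
        tlen (Pi.single 2 1 + Pi.single 3 (c4 - 1) : Fin 4 → ℕ) →
        HomogSet n (Apery n (n 1))) ∧
      (tlen (Pi.single 1 c2 : Fin 4 → ℕ) =
        tlen (Pi.single 0 c21 + Pi.single 3 1 : Fin 4 → ℕ) →
        HomogSet n (Apery n (n 2))) ∧
      (tlen (Pi.single 2 c3 : Fin 4 → ℕ) =
        tlen (Pi.single 0 (c1 - c21 - 1) + Pi.single 1 1 : Fin 4 → ℕ) →
        HomogSet n (Apery n (n 3)))) := by
  have e1 : sval n (Pi.single 0 c1) =
      sval n (Pi.single 2 1 + Pi.single 3 (c4 - 1)) := by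
    rw [← mem_toric_iff k, hI]
    exact Ideal.subset_span (Or.inl rfl)
  have e2 : sval n (Pi.single 1 c2) =
      sval n (Pi.single 0 c21 + Pi.single 3 1) := by
    rw [← mem_toric_iff k, hI]
    exact Ideal.subset_span (Or.inr (Or.inl rfl))
  have e3 : sval n (Pi.single 2 c3) =
      sval n (Pi.single 0 (c1 - c21 - 1) + Pi.single 1 1) := by
    rw [← mem_toric_iff k, hI]
    exact Ideal.subset_span (Or.inr (Or.inr (Or.inl rfl)))
  have e4 : sval n (Pi.single 3 c4) =
      sval n (Pi.single 0 1 + Pi.single 1 (c2 - 1) + Pi.single 2 (c3 - 1)) := by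
    rw [← mem_toric_iff k, hI]
    exact Ideal.subset_span (Or.inr (Or.inr (Or.inr (Or.inl rfl))))
  have e5 : sval n (Pi.single 2 (c3 - 1) + Pi.single 0 (c21 + 1)) =
      sval n (Pi.single 1 1 + Pi.single 3 (c4 - 1)) := by
    rw [← mem_toric_iff k, hI]
    exact Ideal.subset_span (Or.inr (Or.inr (Or.inr (Or.inr rfl))))
  have key : ∀ s : ℕ,
      (sval n (Pi.single 0 c1) ∈ Apery n s → tlen (Pi.single 0 c1 : Fin 4 → ℕ) =
        tlen (Pi.single 2 1 + Pi.single 3 (c4 - 1) : Fin 4 → ℕ)) →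
      (sval n (Pi.single 1 c2) ∈ Apery n s → tlen (Pi.single 1 c2 : Fin 4 → ℕ) =
        tlen (Pi.single 0 c21 + Pi.single 3 1 : Fin 4 → ℕ)) →
      (sval n (Pi.single 2 c3) ∈ Apery n s → tlen (Pi.single 2 c3 : Fin 4 → ℕ) =
        tlen (Pi.single 0 (c1 - c21 - 1) + Pi.single 1 1 : Fin 4 → ℕ)) →
      (sval n (Pi.single 3 c4) ∉ Apery n s) →
      (sval n (Pi.single 2 (c3 - 1) + Pi.single 0 (c21 + 1)) ∉ Apery n s) →
      HomogSet n (Apery n s) := by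
    intro s h1 h2 h3 h4 h5
    refine homog_of_gens k n s _ hI ?_
    rintro g (rfl | rfl | rfl | rfl | rfl)
    · exact ⟨_, _, rfl, h1⟩
    · exact ⟨_, _, rfl, h2⟩
    · exact ⟨_, _, rfl, h3⟩
    · exact ⟨_, _, rfl, fun h => absurd h h4⟩
    · exact ⟨_, _, rfl, fun h => absurd h h5⟩
  have d32 : c3 * n 2 = n 1 → False := by
    intro h
    have := hmin 1 (Pi.single 2 c3) (by rw [sval_single, h])
    rw [tlen_single] at this
    subst this
    have := hinj (show n 2 = n 1 by omega)
    exact absurd this (by decide)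
  have p1 : 0 < c1 - c21 - 1 := by
    by_contra h
    have h0 : c1 - c21 - 1 = 0 := by omega
    rw [h0, sval_add, sval_single, sval_single, sval_single] at e3
    exact d32 (by omega)
  have p2 : 0 < c2 - 1 := by
    by_contra h
    have h0 : c2 = 1 := by omega
    have := hmin 1 (Pi.single 0 c21 + Pi.single 3 1)
      (by rw [← e2, h0, sval_single, one_mul])
    rw [tlen_add, tlen_single, tlen_single] at this
    omega
  have p3 : 0 < c3 - 1 := by
    by_contra h
    have h0 : c3 = 1 := by omega
    have := hmin 2 (Pi.single 0 (c1 - c21 - 1) + Pi.single 1 1)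
      (by rw [← e3, h0, sval_single, one_mul])
    rw [tlen_add, tlen_single, tlen_single] at this
    omega
  have p4 : 0 < c4 - 1 := by
    by_contra h
    have h0 : c4 - 1 = 0 := by omega
    have := hmin 2 (Pi.single 0 c1)
      (by rw [e1, h0, sval_add, sval_single, sval_single]; omega)
    rw [tlen_single] at this
    omega
  have A0 : HomogSet n (Apery n (n 0)) := by
    refine key _ (fun h => absurd h ?_) (fun h => absurd h ?_) (fun h => absurd h ?_) ?_ ?_
    · exact not_apery n 0 _ (by simpa using hc1)
    · rw [e2]; exact not_apery n 0 _ (by simp; omega)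
    · rw [e3]; exact not_apery n 0 _ (by simp; omega)
    · rw [e4]; exact not_apery n 0 _ (by simp)
    · exact not_apery n 0 _ (by simp)
  have A1 : (sval n (Pi.single 0 c1) ∈ Apery n (n 1) → tlen (Pi.single 0 c1 : Fin 4 → ℕ) =
        tlen (Pi.single 2 1 + Pi.single 3 (c4 - 1) : Fin 4 → ℕ)) →
      HomogSet n (Apery n (n 1)) := by
    intro h1
    refine key _ h1 (fun h => absurd h ?_) (fun h => absurd h ?_) ?_ ?_
    · exact not_apery n 1 _ (by simpa using hc2)
    · rw [e3]; exact not_apery n 1 _ (by simp)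
    · rw [e4]; exact not_apery n 1 _ (by simp; omega)
    · rw [e5]; exact not_apery n 1 _ (by simp)
  have A2 : (sval n (Pi.single 1 c2) ∈ Apery n (n 2) → tlen (Pi.single 1 c2 : Fin 4 → ℕ) =
        tlen (Pi.single 0 c21 + Pi.single 3 1 : Fin 4 → ℕ)) →
      HomogSet n (Apery n (n 2)) := by
    intro h1
    refine key _ (fun h => absurd h ?_) h1 (fun h => absurd h ?_) ?_ ?_
    · rw [e1]; exact not_apery n 2 _ (by simp)
    · exact not_apery n 2 _ (by simpa using hc3)
    · rw [e4]; exact not_apery n 2 _ (by simp; omega)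
    · exact not_apery n 2 _ (by simp; omega)
  have A3 : (sval n (Pi.single 2 c3) ∈ Apery n (n 3) → tlen (Pi.single 2 c3 : Fin 4 → ℕ) =
        tlen (Pi.single 0 (c1 - c21 - 1) + Pi.single 1 1 : Fin 4 → ℕ)) →
      HomogSet n (Apery n (n 3)) := by
    intro h1
    refine key _ (fun h => absurd h ?_) (fun h => absurd h ?_) h1 ?_ ?_
    · rw [e1]; exact not_apery n 3 _ (by simp; omega)
    · rw [e2]; exact not_apery n 3 _ (by simp)
    · exact not_apery n 3 _ (by simpa using hc4)
    · rw [e5]; exact not_apery n 3 _ (by simp; omega)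
  refine ⟨A0, ⟨⟨fun h t ht => h t ht.2, fun h => A1 fun hm => ?_⟩,
    ⟨fun h t ht => h t ht.2, fun h => A2 fun hm => ?_⟩,
    ⟨fun h t ht => h t ht.2, fun h => A3 fun hm => ?_⟩⟩,
    fun h => A1 fun _ => h, fun h => A2 fun _ => h, fun h => A3 fun _ => h⟩
  · exact h _ ⟨sval_single n 0 c1, hm⟩
      (by rw [sval_single]; exact (Nat.mul_pos hc1 (hpos _)).ne') _ _ rfl e1.symm
  · exact h _ ⟨sval_single n 1 c2, hm⟩
      (by rw [sval_single]; exact (Nat.mul_pos hc2 (hpos _)).ne') _ _ rfl e2.symm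
  · exact h _ ⟨sval_single n 2 c3, hm⟩
      (by rw [sval_single]; exact (Nat.mul_pos hc3 (hpos _)).ne') _ _ rfl e3.symm
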